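/- Let p be an odd prime and c a positive integer not divisible by p, and let c_0 \in \{1, \dots, p-1\} with c \equiv c_0 \pmod p. Then: (i) E^{c_0}(S^{(c)}) \subseteq S^{(c - 2c_0)} + p \cdot L; (ii) E^p(L) \subseteq p \cdot L; and (iii) if in addition c > c_0, n \ge c-1 and n \equiv c-1 \pmod 2, then E^{c_0}(S^{(c)}) \not\subseteq p \cdot L. -/

import Mathlib

open scoped TensorProduct

/-- The `n`-fold tensor power `L = (ℤ²)^{⊗ n}` over `ℤ`. -/
abbrev Ltens (n : ℕ) := ⨂[ℤ] _ : Fin n, (Fin 2 → ℤ)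

/-- `e : ℤ² → ℤ²` with `e(e₋) = e₊`, `e(e₊) = 0`, where `e₋ = (1,0)`, `e₊ = (0,1)`. -/
noncomputable def eMap : (Fin 2 → ℤ) →ₗ[ℤ] (Fin 2 → ℤ) := Matrix.toLin' !![0, 0; 1, 0]

/-- `f : ℤ² → ℤ²` with `f(e₊) = e₋`, `f(e₋) = 0`. -/
noncomputable def fMap : (Fin 2 → ℤ) →ₗ[ℤ] (Fin 2 → ℤ) := Matrix.toLin' !![0, 1; 0, 0]

/-- `h : ℤ² → ℤ²` with `h(e₊) = e₊`, `h(e₋) = -e₋`. -/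
noncomputable def hMap : (Fin 2 → ℤ) →ₗ[ℤ] (Fin 2 → ℤ) := Matrix.toLin' !![-1, 0; 0, 1]

/-- `E = ∑ᵢ id ⊗ ⋯ ⊗ e ⊗ ⋯ ⊗ id` acting on `(ℤ²)^{⊗ n}`. -/
noncomputable def Eop (n : ℕ) : Module.End ℤ (Ltens n) :=
  ∑ i : Fin n, PiTensorProduct.map (Function.update (fun _ => LinearMap.id) i eMap)

/-- `F = ∑ᵢ id ⊗ ⋯ ⊗ f ⊗ ⋯ ⊗ id` acting on `(ℤ²)^{⊗ n}`. -/
noncomputable def Fop (n : ℕ) : Module.End ℤ (Ltens n) :=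
  ∑ i : Fin n, PiTensorProduct.map (Function.update (fun _ => LinearMap.id) i fMap)

/-- `H = ∑ᵢ id ⊗ ⋯ ⊗ h ⊗ ⋯ ⊗ id` acting on `(ℤ²)^{⊗ n}`. -/
noncomputable def Hop (n : ℕ) : Module.End ℤ (Ltens n) :=
  ∑ i : Fin n, PiTensorProduct.map (Function.update (fun _ => LinearMap.id) i hMap)

/-- `S^{(c)} = {v ∈ L : F v = 0, H v = -(c-1) v}`. -/
def Sspace (n : ℕ) (c : ℤ) : Set (Ltens n) :=
  {v | Fop n v = 0 ∧ Hop n v = (-(c - 1)) • v}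

/-!
Over `ℤ`, the lowest weight vectors of weight `-(c - 1)` are spanned by *singlets*: vectors
`s ⊗ e₋ ⊗ ⋯ ⊗ e₋`, where `s` is supported on a set `K` of `n - (c - 1)` sites and is killed by the
operators `E` and `F` of `K`. This follows by removing the sites one at a time: the lowering
operator of the removed site maps the span of the singlets onto the span of the singlets on the
remaining sites.

On a singlet, `E ^ c₀` only acts on the `c - 1` sites outside `K`. Split them as `A ⊔ B` with
`#A = c₀` and expand `(E_A + E_B) ^ c₀`. As `2 c₀ - c ≡ c₀` modulo `p` and `c₀ < p`, the
coefficients `C(c₀, m)` may be replaced by `C(2 c₀ - c, m)` modulo `p`; with the latter, the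
contributions of `F_A` and `F_B` cancel term by term, so that `F` kills the sum exactly.

Since `eᵢ ^ 2 = 0` and the `eᵢ` commute, the binomial theorem makes `E ^ p` divisible by `p`.
Conversely, applying `c₀` lowering operators outside `K` to `E ^ c₀ v` gives `c₀! v` for a singlet
`v`, and `c₀!` is prime to `p`.
-/

theorem mem_of_isCoprime_smul_mem {R M : Type*} [CommSemiring R] [AddCommMonoid M] [Module R M]
    {N : Submodule R M} {a b : R} (hab : IsCoprime a b) {x : M} (ha : a • x ∈ N) (hb : b • x ∈ N) :
    x ∈ N := by
  obtain ⟨u, v, huv⟩ := hab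
  rw [← one_smul R x, ← huv, add_smul, mul_smul, mul_smul]
  exact add_mem (N.smul_mem u ha) (N.smul_mem v hb)

open scoped Pointwise in
theorem mem_smul_top_iff {R M : Type*} [CommSemiring R] [AddCommMonoid M] [Module R M] {r : R}
    {x : M} : x ∈ r • (⊤ : Submodule R M) ↔ ∃ y, x = r • y := by
  simp [Submodule.mem_smul_pointwise_iff_exists, eq_comm]

theorem natCast_dvd_sum_pow_prime {ι R : Type*} [Ring R] {p : ℕ} (hp : p.Prime) {x : ι → R}
    (s : Finset ι) (hcomm : ∀ i j, Commute (x i) (x j)) (hx : ∀ i, (p : R) ∣ x i ^ p) :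
    (p : R) ∣ (∑ i ∈ s, x i) ^ p := by
  classical
  induction s using Finset.induction_on with
  | empty => simp [hp.ne_zero]
  | insert i s hi ih =>
    obtain ⟨r, hr⟩ := (Commute.sum_right s x (x i) fun j _ ↦ hcomm i j).exists_add_pow_prime_eq hp
    rw [Finset.sum_insert hi, hr, mul_assoc, mul_assoc]
    exact dvd_add (dvd_add (hx i) ih) (dvd_mul_right _ _)

theorem add_pow_succ_of_mul_self_eq_zero {R : Type*} [Semiring R] {x y : R} (h : Commute x y)
    (hx : x * x = 0) (k : ℕ) : (x + y) ^ (k + 1) = y ^ (k + 1) + (k + 1) • (x * y ^ k) := by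
  have hx' (m : ℕ) : x ^ (m + 1 + 1) = 0 := by rw [pow_succ, pow_succ, mul_assoc, hx, mul_zero]
  have hk : (k + 1 : R) * (x * y ^ k) = x * y ^ k * (k + 1) :=
    mod_cast (Nat.cast_commute (k + 1) (x * y ^ k)).eq
  rw [h.add_pow, Finset.sum_range_succ', Finset.sum_range_succ']
  simp [hx', hk, add_comm (y ^ _)]

theorem succ_mul_ringChoose_succ {R : Type*} [CommRing R] [BinomialRing R] (r : R) (k : ℕ) :
    (k + 1) * Ring.choose r (k + 1) = Ring.choose r k * (r - k) := by
  simpa using Ring.choose_smul_choose r (Nat.le_succ k)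

theorem isCoprime_natCast_factorial_of_lt {p : ℕ} (hp : p.Prime) {k : ℕ} (hk : k < p) :
    IsCoprime (p : ℤ) k.factorial :=
  Nat.isCoprime_iff_coprime.2 (hp.coprime_factorial_of_lt hk)

theorem ringChoose_modEq {p : ℕ} (hp : p.Prime) {a b : ℤ} (hab : a ≡ b [ZMOD p]) {k : ℕ}
    (hk : k < p) : Ring.choose a k ≡ Ring.choose b k [ZMOD p] := by
  have hfac (r : ℤ) : (descPochhammer ℤ k).eval r = k.factorial * Ring.choose r k := by
    simpa [Polynomial.eval_eq_smeval] using Ring.descPochhammer_eq_factorial_smul_choose r k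
  rw [Int.modEq_iff_dvd] at hab ⊢
  refine (isCoprime_natCast_factorial_of_lt hp hk).dvd_of_dvd_mul_left ?_
  rw [mul_sub, ← hfac, ← hfac]
  exact hab.trans (Polynomial.sub_dvd_eval_sub b a _)

section End

variable {R M : Type*} [Semiring R] [AddCommMonoid M] [Module R M] {a b : Module.End R M} {v : M}

theorem apply_comm_of_commute (hab : Commute a b) (v : M) : a (b v) = b (a v) :=
  DFunLike.congr_fun hab.eq v

theorem add_pow_apply_of_apply_eq_zero (hab : Commute a b) (hv : a v = 0) (k : ℕ) :
    ((a + b) ^ k) v = (b ^ k) v := by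
  induction k with
  | zero => simp
  | succ k ih =>
    rw [pow_succ', Module.End.mul_apply, ih, LinearMap.add_apply,
      apply_comm_of_commute (hab.pow_right k), hv, map_zero, zero_add, pow_succ',
      Module.End.mul_apply]

end End

theorem apply_pow_apply_of_lie_eq_smul {R M : Type*} [CommRing R] [AddCommGroup M] [Module R M]
    {a b : Module.End R M} {v : M} {d l : R} (hab : ⁅a, b⁆ = d • b) (hv : a v = l • v)
    (k : ℕ) : a ((b ^ k) v) = (l + k * d) • (b ^ k) v := by
  induction k with
  | zero => simpa using hv
  | succ k ih =>
    have hcomm (w : M) : a (b w) = b (a w) + d • b w := by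
      rw [← LinearMap.smul_apply, ← hab]; simp [Ring.lie_def]
    rw [pow_succ', Module.End.mul_apply, hcomm, ih, map_smul, ← add_smul]
    push_cast
    ring_nf

/-! ### Systems of spins -/

/-- Operators `e i` and `f i` on an abelian group `L` which generate commuting actions, one for each
site `i : ι`, of the ring of integral `2 × 2` matrices: `e i` acts as the matrix unit sending the
down state to the up state, and `f i` as its transpose. This is the structure of the operators at
the factors of a tensor power of `ℤ²`; keeping `ι` and `L` abstract lets a set of sites be split
without splitting the tensor product. -/
structure SpinHalfSystem (ι L : Type*) [AddCommGroup L] where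
  e : ι → Module.End ℤ L
  f : ι → Module.End ℤ L
  e_mul_self (i : ι) : e i * e i = 0
  f_mul_self (i : ι) : f i * f i = 0
  e_mul_f_add_f_mul_e (i : ι) : e i * f i + f i * e i = 1
  commute_e_e (i j : ι) : Commute (e i) (e j)
  commute_f_f (i j : ι) : Commute (f i) (f j)
  commute_e_f {i j : ι} : i ≠ j → Commute (e i) (f j)

namespace SpinHalfSystem

open scoped Pointwise

attribute [local instance] LieRing.ofAssociativeRing

variable {ι L : Type*} [AddCommGroup L] (S : SpinHalfSystem ι L)

/-- The weight operator at the site `i`, with eigenvalue `-1` on the down state and `1` on the up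
state. -/
def h (i : ι) : Module.End ℤ L := ⁅S.e i, S.f i⁆

/-- The raising operator of the diagonal `sl₂` acting on the sites of `U`. -/
def E (U : Finset ι) : Module.End ℤ L := ∑ i ∈ U, S.e i

/-- The lowering operator of the diagonal `sl₂` acting on the sites of `U`. -/
def F (U : Finset ι) : Module.End ℤ L := ∑ i ∈ U, S.f i

/-- The weight operator of the diagonal `sl₂` acting on the sites of `U`. -/
def H (U : Finset ι) : Module.End ℤ L := ∑ i ∈ U, S.h i

theorem e_mul_f_mul_e (i : ι) : S.e i * S.f i * S.e i = S.e i := by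
  rw [eq_sub_of_add_eq (S.e_mul_f_add_f_mul_e i), sub_mul, mul_assoc, S.e_mul_self, mul_zero,
    one_mul, sub_zero]

theorem f_mul_e_mul_f (i : ι) : S.f i * S.e i * S.f i = S.f i := by
  rw [eq_sub_of_add_eq' (S.e_mul_f_add_f_mul_e i), sub_mul, mul_assoc, S.f_mul_self, mul_zero,
    one_mul, sub_zero]

theorem lie_h_e (i : ι) : ⁅S.h i, S.e i⁆ = 2 • S.e i := by
  simp only [h, Ring.lie_def, sub_mul, mul_sub, S.e_mul_f_mul_e, ← mul_assoc, S.e_mul_self]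
  simp [mul_assoc, S.e_mul_self, two_mul]

theorem lie_h_f (i : ι) : ⁅S.h i, S.f i⁆ = -(2 • S.f i) := by
  simp only [h, Ring.lie_def, sub_mul, mul_sub, S.f_mul_e_mul_f, ← mul_assoc, S.f_mul_self]
  simp [mul_assoc, S.f_mul_self, two_mul, sub_eq_add_neg]

theorem commute_h_e {i j : ι} (hij : i ≠ j) : Commute (S.h i) (S.e j) := by
  rw [h, Ring.lie_def]
  exact ((S.commute_e_e i j).mul_left (S.commute_e_f hij.symm).symm).sub_left
    ((S.commute_e_f hij.symm).symm.mul_left (S.commute_e_e i j))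

theorem commute_h_f {i j : ι} (hij : i ≠ j) : Commute (S.h i) (S.f j) := by
  rw [h, Ring.lie_def]
  exact ((S.commute_e_f hij).mul_left (S.commute_f_f i j)).sub_left
    ((S.commute_f_f i j).mul_left (S.commute_e_f hij))

theorem commute_E_E (U V : Finset ι) : Commute (S.E U) (S.E V) :=
  Commute.sum_left _ _ _ fun i _ ↦ Commute.sum_right _ _ _ fun j _ ↦ S.commute_e_e i j

theorem commute_e_E (i : ι) (U : Finset ι) : Commute (S.e i) (S.E U) :=
  Commute.sum_right _ _ _ fun j _ ↦ S.commute_e_e i j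

theorem commute_f_E {i : ι} {U : Finset ι} (hi : i ∉ U) : Commute (S.f i) (S.E U) :=
  Commute.sum_right _ _ _ fun _ hj ↦ (S.commute_e_f (ne_of_mem_of_not_mem hj hi)).symm

theorem commute_e_F {i : ι} {U : Finset ι} (hi : i ∉ U) : Commute (S.e i) (S.F U) :=
  Commute.sum_right _ _ _ fun _ hj ↦ S.commute_e_f (ne_of_mem_of_not_mem hj hi).symm

theorem commute_F_E {U V : Finset ι} (hUV : Disjoint U V) : Commute (S.F U) (S.E V) :=
  Commute.sum_left _ _ _ fun _ hi ↦ S.commute_f_E (Finset.disjoint_left.1 hUV hi)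

theorem lie_E_f {i : ι} {U : Finset ι} (hi : i ∈ U) : ⁅S.E U, S.f i⁆ = S.h i := by
  rw [E, sum_lie, Finset.sum_eq_single_of_mem i hi fun j _ hj ↦ (S.commute_e_f hj).lie_eq, h]

theorem lie_E_F (U : Finset ι) : ⁅S.E U, S.F U⁆ = S.H U := by
  rw [F, lie_sum, H]
  exact Finset.sum_congr rfl fun i hi ↦ S.lie_E_f hi

theorem lie_H_e {i : ι} {U : Finset ι} (hi : i ∈ U) : ⁅S.H U, S.e i⁆ = 2 • S.e i := by
  rw [H, sum_lie, Finset.sum_eq_single_of_mem i hi fun j _ hj ↦ (S.commute_h_e hj).lie_eq,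
    S.lie_h_e]

theorem lie_H_f {i : ι} {U : Finset ι} (hi : i ∈ U) : ⁅S.H U, S.f i⁆ = -(2 • S.f i) := by
  rw [H, sum_lie, Finset.sum_eq_single_of_mem i hi fun j _ hj ↦ (S.commute_h_f hj).lie_eq,
    S.lie_h_f]

theorem lie_H_E {A U : Finset ι} (hAU : A ⊆ U) : ⁅S.H U, S.E A⁆ = 2 • S.E A := by
  rw [E, lie_sum, Finset.smul_sum]
  exact Finset.sum_congr rfl fun i hi ↦ S.lie_H_e (hAU hi)

theorem lie_H_F (U : Finset ι) : ⁅S.H U, S.F U⁆ = -(2 • S.F U) := by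
  rw [F, lie_sum, Finset.smul_sum, ← Finset.sum_neg_distrib]
  exact Finset.sum_congr rfl fun i hi ↦ S.lie_H_f hi

/-- The lowest weight vectors of weight `l` for the `sl₂` acting on the sites of `U`. -/
def lowestWeight (U : Finset ι) (l : ℤ) : Submodule ℤ L :=
  LinearMap.ker (S.F U) ⊓ Module.End.eigenspace (S.H U) l

variable {S} in
theorem mem_lowestWeight {U : Finset ι} {l : ℤ} {v : L} :
    v ∈ S.lowestWeight U l ↔ S.F U v = 0 ∧ S.H U v = l • v := by
  rw [lowestWeight, Submodule.mem_inf, LinearMap.mem_ker, Module.End.mem_eigenspace_iff]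

section Sl2

variable [Module.IsTorsionFree ℤ L] {U : Finset ι} {v : L}

theorem H_ne_zero [Nontrivial L] (hU : U.Nonempty) : S.H U ≠ 0 := by
  obtain ⟨i, hi⟩ := hU
  intro hH
  have h2e : (2 : ℤ) • S.e i = 0 := by rw [two_zsmul, ← two_nsmul, ← S.lie_H_e hi, hH, zero_lie]
  have he : S.e i = 0 := (smul_eq_zero.1 h2e).resolve_left two_ne_zero
  have h01 := S.e_mul_f_add_f_mul_e i
  simp [he] at h01

theorem isSl2Triple [Nontrivial L] (hU : U.Nonempty) : IsSl2Triple (S.H U) (S.E U) (S.F U) where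
  h_ne_zero := S.H_ne_zero hU
  lie_e_f := S.lie_E_F U
  lie_h_e_nsmul := S.lie_H_E subset_rfl
  lie_h_f_nsmul := S.lie_H_F U

theorem hasPrimitiveVectorWith [Nontrivial L] (hU : U.Nonempty) {l : ℤ}
    (hv : v ∈ S.lowestWeight U l) (hv0 : v ≠ 0) :
    (S.isSl2Triple hU).symm.HasPrimitiveVectorWith v (-l) where
  ne_zero := hv0
  lie_h := by simp [(mem_lowestWeight.1 hv).2]
  lie_e := (mem_lowestWeight.1 hv).1

theorem nonpos_of_mem_lowestWeight [IsNoetherian ℤ L] {l : ℤ} (hv : v ∈ S.lowestWeight U l)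
    (hv0 : v ≠ 0) : l ≤ 0 := by
  have : Nontrivial L := ⟨v, 0, hv0⟩
  obtain rfl | hU := U.eq_empty_or_nonempty
  · have h : l • v = 0 := by simpa [H] using (mem_lowestWeight.1 hv).2.symm
    exact ((smul_eq_zero.1 h).resolve_right hv0).le
  · obtain ⟨m, hm⟩ := (S.hasPrimitiveVectorWith hU hv hv0).exists_nat
    lia

theorem F_pow_E_apply {l : ℤ} (hv : v ∈ S.lowestWeight U l) (k : ℕ) :
    S.F U ((S.E U ^ (k + 1)) v) = ((k + 1) * (-l - k)) • (S.E U ^ k) v := by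
  obtain rfl | hv0 := eq_or_ne v 0
  · simp
  have : Nontrivial L := ⟨v, 0, hv0⟩
  obtain rfl | hU := U.eq_empty_or_nonempty
  · have h : l • v = 0 := by simpa [H] using (mem_lowestWeight.1 hv).2.symm
    cases k <;> simp [E, F, (smul_eq_zero.1 h).resolve_right hv0]
  · exact (S.hasPrimitiveVectorWith hU hv hv0).lie_e_pow_succ_toEnd_f k

end Sl2

/-! ### Singlets -/

/-- The vectors that are in the down state at every site outside `U`. -/
def vacuumOutside (U : Finset ι) : Submodule ℤ L :=
  ⨅ (i) (_ : i ∉ U), LinearMap.ker (S.f i)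

/-- The vectors that are in the down state `e₋` outside `K` and span a trivial representation of
the `sl₂` acting on the sites of `K`. -/
def singlets (K : Finset ι) : Submodule ℤ L :=
  S.vacuumOutside K ⊓ LinearMap.ker (S.E K) ⊓ LinearMap.ker (S.F K)

/-- The span of the singlets supported in `U` which have weight `l` for `U`: a singlet on `K ⊆ U`
has weight `#K - #U`. -/
def singletSpan (U : Finset ι) (l : ℤ) : Submodule ℤ L :=
  ⨆ (K) (_ : K ⊆ U ∧ (K.card : ℤ) = U.card + l), S.singlets K

variable {S} {U K A B T : Finset ι} {i j : ι} {l : ℤ} {v : L}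

theorem mem_vacuumOutside : v ∈ S.vacuumOutside U ↔ ∀ i ∉ U, S.f i v = 0 := by
  simp [vacuumOutside]

theorem mem_singlets :
    v ∈ S.singlets K ↔ (∀ i ∉ K, S.f i v = 0) ∧ S.E K v = 0 ∧ S.F K v = 0 := by
  simp [singlets, mem_vacuumOutside, and_assoc]

theorem vacuumOutside_mono : Monotone S.vacuumOutside := fun _ _ hUV _ hv ↦
  mem_vacuumOutside.2 fun i hi ↦ mem_vacuumOutside.1 hv i (mt (@hUV i) hi)

theorem f_f_apply (i : ι) (v : L) : S.f i (S.f i v) = 0 :=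
  LinearMap.congr_fun (S.f_mul_self i) v

theorem f_e_apply (hv : S.f i v = 0) : S.f i (S.e i v) = v := by
  simpa [hv] using LinearMap.congr_fun (S.e_mul_f_add_f_mul_e i) v

theorem h_apply (hv : S.f i v = 0) : S.h i v = -v := by
  simp [h, Ring.lie_def, hv, f_e_apply hv]

theorem F_apply_eq_zero (hv : ∀ i ∈ T, S.f i v = 0) : S.F T v = 0 := by
  rw [F, LinearMap.sum_apply, Finset.sum_eq_zero hv]

theorem H_apply_eq_neg_card_smul (hv : ∀ i ∈ T, S.f i v = 0) : S.H T v = -(T.card : ℤ) • v := by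
  rw [H, LinearMap.sum_apply, Finset.sum_congr rfl fun i hi ↦ h_apply (hv i hi)]
  simp

theorem mem_lowestWeight_neg_card (hv : ∀ i ∈ T, S.f i v = 0) :
    v ∈ S.lowestWeight T (-T.card) :=
  mem_lowestWeight.2 ⟨F_apply_eq_zero hv, H_apply_eq_neg_card_smul hv⟩

theorem f_apply_mem_lowestWeight (hi : i ∈ U) (hv : v ∈ S.lowestWeight U l) :
    S.f i v ∈ S.lowestWeight U (l - 2) := by
  obtain ⟨hF, hH⟩ := mem_lowestWeight.1 hv
  refine mem_lowestWeight.2 ⟨?_, ?_⟩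
  · have hc : Commute (S.F U) (S.f i) := Commute.sum_left _ _ _ fun j _ ↦ S.commute_f_f j i
    rw [apply_comm_of_commute hc, hF, map_zero]
  · have hd : ⁅S.H U, S.f i⁆ = (-2 : ℤ) • S.f i := by simpa [two_mul] using S.lie_H_f hi
    simpa [sub_eq_add_neg] using apply_pow_apply_of_lie_eq_smul hd hH 1

theorem mem_lowestWeight_zero_of_mem_singlets (hv : v ∈ S.singlets K) :
    v ∈ S.lowestWeight K 0 := by
  obtain ⟨-, hE, hF⟩ := mem_singlets.1 hv
  exact mem_lowestWeight.2 ⟨hF, by simp [← S.lie_E_F K, Ring.lie_def, hE, hF]⟩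

theorem singlets_le_singletSpan (hKU : K ⊆ U) (hK : (K.card : ℤ) = U.card + l) :
    S.singlets K ≤ S.singletSpan U l :=
  le_iSup₂_of_le K ⟨hKU, hK⟩ le_rfl

section Insert

variable [DecidableEq ι]

theorem E_insert (hi : i ∉ U) : S.E (insert i U) = S.e i + S.E U :=
  Finset.sum_insert hi

theorem F_insert (hi : i ∉ U) : S.F (insert i U) = S.f i + S.F U :=
  Finset.sum_insert hi

theorem E_union (hAB : Disjoint A B) : S.E (A ∪ B) = S.E A + S.E B :=
  Finset.sum_union hAB

theorem F_union (hAB : Disjoint A B) : S.F (A ∪ B) = S.F A + S.F B :=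
  Finset.sum_union hAB

theorem H_union (hAB : Disjoint A B) : S.H (A ∪ B) = S.H A + S.H B :=
  Finset.sum_union hAB

theorem mem_lowestWeight_union (hTU : Disjoint T U) (hv : ∀ i ∈ T, S.f i v = 0) :
    v ∈ S.lowestWeight (T ∪ U) l ↔ v ∈ S.lowestWeight U (l + T.card) := by
  rw [mem_lowestWeight, mem_lowestWeight, F_union hTU, H_union hTU, LinearMap.add_apply,
    LinearMap.add_apply, F_apply_eq_zero hv, H_apply_eq_neg_card_smul hv, zero_add, neg_smul,
    neg_add_eq_iff_eq_add, add_comm l, add_smul]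

theorem mem_lowestWeight_insert (hi : i ∉ U) (hv : S.f i v = 0) :
    v ∈ S.lowestWeight (insert i U) l ↔ v ∈ S.lowestWeight U (l + 1) := by
  simpa using mem_lowestWeight_union (T := {i}) (l := l)
    (Finset.disjoint_singleton_left.2 hi) (by simpa using hv)

theorem f_apply_mem_lowestWeight_of_insert (hi : i ∉ U) (hv : v ∈ S.lowestWeight (insert i U) l) :
    S.f i v ∈ S.lowestWeight U (l - 1) := by
  have hfv := f_apply_mem_lowestWeight (Finset.mem_insert_self i U) hv
  rwa [mem_lowestWeight_insert hi (f_f_apply i v), show l - 2 + 1 = l - 1 by ring] at hfv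

theorem mem_vacuumOutside_of_insert (hv : v ∈ S.vacuumOutside (insert i U)) (hfv : S.f i v = 0) :
    v ∈ S.vacuumOutside U := by
  refine mem_vacuumOutside.2 fun j hj ↦ ?_
  obtain rfl | hji := eq_or_ne j i
  · exact hfv
  · exact mem_vacuumOutside.1 hv j (by simp [hji, hj])

theorem f_apply_mem_vacuumOutside (hv : v ∈ S.vacuumOutside (insert i U)) :
    S.f i v ∈ S.vacuumOutside U := by
  refine mem_vacuumOutside_of_insert (mem_vacuumOutside.2 fun j hj ↦ ?_) (f_f_apply i v)
  rw [apply_comm_of_commute (S.commute_f_f j i), mem_vacuumOutside.1 hv j hj, map_zero]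

theorem singlets_le_map_f (hi : i ∉ K) (hj : j ∉ K) (hij : i ≠ j) :
    S.singlets K ≤ (S.singlets (insert i (insert j K))).map (S.f i) := by
  intro v hv
  obtain ⟨hf, hE, hF⟩ := mem_singlets.1 hv
  have hi' : i ∉ insert j K := by simp [hij, hi]
  have hfe {k m : ι} (hkm : k ≠ m) (hk : k ∉ K) : S.f k (S.e m v) = 0 := by
    rw [← apply_comm_of_commute (S.commute_e_f hkm.symm), hf k hk, map_zero]
  have hfi : S.f i (S.e i v - S.e j v) = v := by simp [f_e_apply (hf i hi), hfe hij hi]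
  have hfj : S.f j (S.e i v - S.e j v) = -v := by simp [f_e_apply (hf j hj), hfe hij.symm hj]
  refine ⟨S.e i v - S.e j v, mem_singlets.2 ⟨fun k hk ↦ ?_, ?_, ?_⟩, hfi⟩
  · simp only [Finset.mem_insert, not_or] at hk
    rw [map_sub, hfe hk.1 hk.2.2, hfe hk.2.1 hk.2.2, sub_zero]
  · have hEv : S.E (insert i (insert j K)) v = S.e i v + S.e j v := by
      simp [E_insert hi', E_insert hj, hE]
    have hee (k : ι) : S.e k (S.e k v) = 0 := LinearMap.congr_fun (S.e_mul_self k) v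
    simp [apply_comm_of_commute (S.commute_e_E _ _).symm, hEv, hee,
      apply_comm_of_commute (S.commute_e_e i j)]
  · have hFe {k : ι} (hk : k ∉ K) : S.F K (S.e k v) = 0 := by
      rw [← apply_comm_of_commute (S.commute_e_F hk), hF, map_zero]
    rw [F_insert hi', F_insert hj, LinearMap.add_apply, LinearMap.add_apply, hfi, hfj, map_sub,
      hFe hi, hFe hj]
    simp

theorem singletSpan_le_insert (hi : i ∉ U) :
    S.singletSpan U (l + 1) ≤ S.singletSpan (insert i U) l := by
  refine iSup₂_le fun K ⟨hKU, hK⟩ ↦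
    singlets_le_singletSpan (hKU.trans (Finset.subset_insert i U)) ?_
  rw [hK, Finset.card_insert_of_notMem hi, Nat.cast_succ]
  ring

theorem singletSpan_le_map_f (hi : i ∉ U) (hl : l ≤ 0) :
    S.singletSpan U (l - 1) ≤ (S.singletSpan (insert i U) l).map (S.f i) := by
  refine iSup₂_le fun K ⟨hKU, hK⟩ ↦ ?_
  obtain ⟨j, hjU, hjK⟩ := Finset.exists_mem_notMem_of_card_lt_card (show K.card < U.card by lia)
  have hij : i ≠ j := (ne_of_mem_of_not_mem hjU hi).symm
  have hiK : i ∉ K := mt (@hKU i) hi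
  refine (singlets_le_map_f hiK hjK hij).trans
    (Submodule.map_mono (singlets_le_singletSpan ?_ ?_))
  · exact Finset.insert_subset_insert i (Finset.insert_subset hjU hKU)
  · rw [Finset.card_insert_of_notMem (by simp [hij, hiK]), Finset.card_insert_of_notMem hjK,
      Finset.card_insert_of_notMem hi]
    push_cast
    linear_combination hK

end Insert

theorem singlets_le_lowestWeight (hKU : K ⊆ U) :
    S.singlets K ≤ S.lowestWeight U (K.card - U.card) := by
  classical
  intro v hv
  have hf : ∀ i ∈ U \ K, S.f i v = 0 := fun i hi ↦
    (mem_singlets.1 hv).1 i (Finset.mem_sdiff.1 hi).2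
  rw [← Finset.sdiff_union_of_subset hKU, mem_lowestWeight_union Finset.sdiff_disjoint hf,
    Finset.sdiff_union_of_subset hKU, Finset.cast_card_sdiff hKU, sub_add_sub_cancel, sub_self]
  exact mem_lowestWeight_zero_of_mem_singlets hv

theorem singletSpan_le_vacuumOutside_inf_lowestWeight :
    S.singletSpan U l ≤ S.vacuumOutside U ⊓ S.lowestWeight U l := by
  refine iSup₂_le fun K ⟨hKU, hK⟩ ↦ le_inf ?_ ?_
  · exact (inf_le_left.trans inf_le_left).trans (vacuumOutside_mono hKU)
  · exact (singlets_le_lowestWeight hKU).trans_eq (by rw [hK, add_sub_cancel_left])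

section Span

variable [Module.IsTorsionFree ℤ L]

theorem vacuumOutside_inf_lowestWeight_empty_le :
    S.vacuumOutside ∅ ⊓ S.lowestWeight ∅ l ≤ S.singletSpan ∅ l := by
  rintro v ⟨hvac, hv⟩
  have hl : l • v = 0 := by simpa [H] using (mem_lowestWeight.1 hv).2.symm
  obtain rfl | rfl := smul_eq_zero.1 hl
  · exact singlets_le_singletSpan subset_rfl (by simp)
      (mem_singlets.2 ⟨mem_vacuumOutside.1 hvac, by simp [E], by simp [F]⟩)
  · exact zero_mem _

variable [IsNoetherian ℤ L]

theorem vacuumOutside_inf_lowestWeight_le_singletSpan (U : Finset ι) (l : ℤ) :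
    S.vacuumOutside U ⊓ S.lowestWeight U l ≤ S.singletSpan U l := by
  classical
  induction U using Finset.induction_on generalizing l with
  | empty => exact vacuumOutside_inf_lowestWeight_empty_le
  | insert i U hi ih =>
    rintro v ⟨hvac, hv⟩
    obtain rfl | hv0 := eq_or_ne v 0
    · exact zero_mem _
    have hl : l ≤ 0 := S.nonpos_of_mem_lowestWeight hv hv0
    obtain ⟨w, hw, hwv⟩ := singletSpan_le_map_f hi hl
      (ih (l - 1) ⟨f_apply_mem_vacuumOutside hvac, f_apply_mem_lowestWeight_of_insert hi hv⟩)
    have hw' := singletSpan_le_vacuumOutside_inf_lowestWeight hw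
    have hd : S.f i (v - w) = 0 := by rw [map_sub, hwv, sub_self]
    have hvw : v - w ∈ S.singletSpan (insert i U) l := singletSpan_le_insert hi <| ih (l + 1)
      ⟨mem_vacuumOutside_of_insert (sub_mem hvac hw'.1) hd,
        (mem_lowestWeight_insert hi hd).1 (sub_mem hv hw'.2)⟩
    simpa using add_mem hvw hw

theorem lowestWeight_univ_le_singletSpan [Fintype ι] :
    S.lowestWeight Finset.univ l ≤ S.singletSpan Finset.univ l := by
  refine le_trans (le_inf (fun v _ ↦ ?_) le_rfl)
    (vacuumOutside_inf_lowestWeight_le_singletSpan Finset.univ l)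
  simp [mem_vacuumOutside]

end Span

/-! ### Powers of the raising operator -/

open Finset.HasAntidiagonal (antidiagonal mem_antidiagonal)

/-- The binomial expansion of `(E A + E B) ^ k`, with the binomial coefficients of the exponent `k`
replaced by those of an integer `r`. -/
def binomialSum (S : SpinHalfSystem ι L) (A B : Finset ι) (r : ℤ) (k : ℕ) : Module.End ℤ L :=
  ∑ m ∈ antidiagonal k, Ring.choose r m.1 • (S.E A ^ m.1 * S.E B ^ m.2)

theorem binomialSum_natCast [DecidableEq ι] (hAB : Disjoint A B) (k : ℕ) :
    S.binomialSum A B k k = S.E (A ∪ B) ^ k := by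
  simp [binomialSum, E_union hAB, (S.commute_E_E A B).add_pow', Ring.choose_natCast]

theorem binomialSum_apply_sub_mem {p : ℕ} (hp : p.Prime) {r s : ℤ} (hrs : r ≡ s [ZMOD p]) {k : ℕ}
    (hk : k < p) (A B : Finset ι) (v : L) :
    S.binomialSum A B r k v - S.binomialSum A B s k v ∈ (p : ℤ) • (⊤ : Submodule ℤ L) := by
  simp only [binomialSum, LinearMap.sum_apply, ← Finset.sum_sub_distrib, LinearMap.smul_apply,
    ← sub_smul]
  refine Submodule.sum_mem _ fun m hm ↦ ?_
  have hmk : m.1 ≤ k := Finset.HasAntidiagonal.antidiagonal.fst_le hm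
  obtain ⟨t, ht⟩ := (ringChoose_modEq hp hrs (hmk.trans_lt hk)).symm.dvd
  exact mem_smul_top_iff.2 ⟨_, by rw [ht, mul_smul]⟩

theorem commute_F_binomialSum (hA : Disjoint K A) (hB : Disjoint K B) (r : ℤ) (k : ℕ) :
    Commute (S.F K) (S.binomialSum A B r k) :=
  Commute.sum_right _ _ _ fun _ _ ↦
    (((S.commute_F_E hA).pow_right _).mul_right ((S.commute_F_E hB).pow_right _)).smul_right _

theorem H_binomialSum_apply (hA : A ⊆ U) (hB : B ⊆ U) (hv : S.H U v = l • v) (r : ℤ) (k : ℕ) :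
    S.H U (S.binomialSum A B r k v) = (l + 2 * k) • S.binomialSum A B r k v := by
  have hE {C : Finset ι} (hC : C ⊆ U) : ⁅S.H U, S.E C⁆ = (2 : ℤ) • S.E C := by
    simpa [two_mul] using S.lie_H_E hC
  simp only [binomialSum, LinearMap.sum_apply, map_sum, Finset.smul_sum]
  refine Finset.sum_congr rfl fun m hm ↦ ?_
  rw [LinearMap.smul_apply, map_smul, Module.End.mul_apply, smul_comm,
    apply_pow_apply_of_lie_eq_smul (hE hA) (apply_pow_apply_of_lie_eq_smul (hE hB) hv _),
    ← mem_antidiagonal.1 hm]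
  push_cast
  ring_nf

theorem F_E_pow_apply_eq_zero (hAB : Disjoint A B) (hA : ∀ i ∈ A, S.f i v = 0) (j : ℕ) :
    S.F A ((S.E B ^ j) v) = 0 := by
  rw [apply_comm_of_commute ((S.commute_F_E hAB).pow_right j), F_apply_eq_zero hA, map_zero]

section Vanishing

variable [Module.IsTorsionFree ℤ L]

theorem F_E_pow_mul_apply (hAB : Disjoint A B) (hA : ∀ i ∈ A, S.f i v = 0) (i j : ℕ) :
    S.F A ((S.E A ^ (i + 1) * S.E B ^ j) v) =
      ((i + 1) * (A.card - i) : ℤ) • (S.E A ^ i * S.E B ^ j) v := by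
  have hB : ∀ i ∈ A, S.f i ((S.E B ^ j) v) = 0 := fun i hi ↦ by
    have hiB : i ∉ B := Finset.disjoint_left.1 hAB hi
    rw [apply_comm_of_commute ((S.commute_f_E hiB).pow_right j), hA i hi, map_zero]
  simpa using S.F_pow_E_apply (mem_lowestWeight_neg_card hB) i

theorem F_binomialSum_apply_left (hAB : Disjoint A B) (hA : ∀ i ∈ A, S.f i v = 0) (r : ℤ)
    (k : ℕ) :
    S.F A (S.binomialSum A B r (k + 1) v) = ∑ m ∈ antidiagonal k,
      (Ring.choose r m.1 * ((r - m.1) * (A.card - m.1))) • (S.E A ^ m.1 * S.E B ^ m.2) v := by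
  simp only [binomialSum, LinearMap.sum_apply, map_sum, LinearMap.smul_apply, map_smul]
  rw [Finset.Nat.sum_antidiagonal_succ]
  simp only [F_E_pow_mul_apply hAB hA, smul_smul, ← mul_assoc, ← succ_mul_ringChoose_succ]
  simp [F_E_pow_apply_eq_zero hAB hA, mul_comm]

theorem F_binomialSum_apply_right (hAB : Disjoint A B) (hB : ∀ i ∈ B, S.f i v = 0) (r : ℤ)
    (k : ℕ) :
    S.F B (S.binomialSum A B r (k + 1) v) = ∑ m ∈ antidiagonal k,
      (Ring.choose r m.1 * ((m.2 + 1) * (B.card - m.2))) • (S.E A ^ m.1 * S.E B ^ m.2) v := by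
  simp only [binomialSum, LinearMap.sum_apply, map_sum, LinearMap.smul_apply, map_smul,
    ((S.commute_E_E A B).pow_pow _ _).eq]
  rw [Finset.Nat.sum_antidiagonal_succ']
  simp only [F_E_pow_mul_apply hAB.symm hB, smul_smul]
  simp [F_E_pow_apply_eq_zero hAB.symm hB]

theorem F_binomialSum_apply_eq_zero [DecidableEq ι] (hAB : Disjoint A B)
    (hv : ∀ i ∈ A ∪ B, S.f i v = 0) {r : ℤ} (hr : (B.card : ℤ) = A.card - 1 - r) :
    S.F (A ∪ B) (S.binomialSum A B r A.card v) = 0 := by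
  have hA : ∀ i ∈ A, S.f i v = 0 := fun i hi ↦ hv i (Finset.mem_union_left B hi)
  have hB : ∀ i ∈ B, S.f i v = 0 := fun i hi ↦ hv i (Finset.mem_union_right A hi)
  rcases hk : A.card with _ | k
  · simp [binomialSum, F_apply_eq_zero hv]
  rw [F_union hAB, LinearMap.add_apply, F_binomialSum_apply_left hAB hA,
    F_binomialSum_apply_right hAB hB, ← Finset.sum_add_distrib]
  refine Finset.sum_eq_zero fun m hm ↦ ?_
  have hm' : (m.1 : ℤ) + m.2 = k := mod_cast mem_antidiagonal.1 hm
  rw [← add_smul, hr, hk]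
  refine smul_eq_zero_of_left ?_ _
  push_cast
  rw [← hm']
  ring

end Vanishing

theorem E_univ_pow_apply [DecidableEq ι] [Fintype ι] (hv : v ∈ S.singlets K) (k : ℕ) :
    (S.E Finset.univ ^ k) v = (S.E Kᶜ ^ k) v := by
  rw [← Finset.union_compl K, E_union disjoint_compl_right,
    add_pow_apply_of_apply_eq_zero (S.commute_E_E _ _) (mem_singlets.1 hv).2.1]

section Lift

variable [Module.IsTorsionFree ℤ L]

theorem binomialSum_apply_mem_lowestWeight [DecidableEq ι] (hv : v ∈ S.singlets K)
    (hAB : Disjoint A B) (hK : Disjoint K (A ∪ B)) {r : ℤ} (hr : (B.card : ℤ) = A.card - 1 - r) :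
    S.binomialSum A B r A.card v ∈ S.lowestWeight (K ∪ (A ∪ B)) (A.card - B.card) := by
  obtain ⟨hf, -, hF⟩ := mem_singlets.1 hv
  obtain ⟨hKA, hKB⟩ := Finset.disjoint_union_right.1 hK
  have hH := (mem_lowestWeight.1 (singlets_le_lowestWeight (U := K ∪ (A ∪ B))
    Finset.subset_union_left hv)).2
  have hAU : A ⊆ K ∪ (A ∪ B) := by grind
  have hBU : B ⊆ K ∪ (A ∪ B) := by grind
  refine mem_lowestWeight.2 ⟨?_, ?_⟩
  · rw [F_union hK, LinearMap.add_apply,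
      apply_comm_of_commute (commute_F_binomialSum hKA hKB r A.card), hF, map_zero, zero_add,
      F_binomialSum_apply_eq_zero hAB (fun i hi ↦ hf i (Finset.disjoint_right.1 hK hi)) hr]
  · rw [H_binomialSum_apply hAU hBU hH, Finset.card_union_of_disjoint hK,
      Finset.card_union_of_disjoint hAB]
    push_cast
    ring_nf

theorem E_pow_apply_mem_of_mem_singlets [DecidableEq ι] [Fintype ι] {p : ℕ} (hp : p.Prime)
    {a : ℕ} (hap : a < p) (haK : a ≤ Kᶜ.card) (hmod : (Kᶜ.card : ℤ) + 1 ≡ a [ZMOD p])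
    (hv : v ∈ S.singlets K) :
    (S.E Finset.univ ^ a) v ∈
      S.lowestWeight Finset.univ (2 * a - Kᶜ.card) ⊔ (p : ℤ) • (⊤ : Submodule ℤ L) := by
  obtain ⟨A, hAK, rfl⟩ := Finset.exists_subset_card_eq haK
  set B := Kᶜ \ A
  set r : ℤ := 2 * A.card - 1 - Kᶜ.card with hr
  have hABK : A ∪ B = Kᶜ := Finset.union_sdiff_of_subset hAK
  have hcard : (B.card : ℤ) = Kᶜ.card - A.card := Finset.cast_card_sdiff hAK
  have hlow := binomialSum_apply_mem_lowestWeight (r := r) hv (B := B) Finset.disjoint_sdiff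
    (hABK ▸ disjoint_compl_right) (by rw [hcard]; ring)
  have hr' : (A.card : ℤ) ≡ r [ZMOD p] := by
    rw [Int.modEq_iff_dvd, hr]
    exact hmod.dvd.trans (dvd_of_eq (by ring))
  have hsub := binomialSum_apply_sub_mem (S := S) hp hr' hap A B v
  rw [binomialSum_natCast Finset.disjoint_sdiff, hABK, ← E_univ_pow_apply hv] at hsub
  refine Submodule.mem_sup.2 ⟨_, ?_, _, hsub, add_sub_cancel _ _⟩
  rw [hABK, Finset.union_compl, hcard] at hlow
  rwa [show (2 * A.card - Kᶜ.card : ℤ) = A.card - (Kᶜ.card - A.card) by ring]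

theorem E_pow_apply_mem_lowestWeight {k : ℕ} (hv : v ∈ S.lowestWeight U (1 - k)) :
    (S.E U ^ k) v ∈ S.lowestWeight U (1 + k) := by
  rcases k with _ | k
  · simpa using hv
  have hE : ⁅S.H U, S.E U⁆ = (2 : ℤ) • S.E U := by simpa [two_mul] using S.lie_H_E (subset_refl U)
  refine mem_lowestWeight.2 ⟨?_, ?_⟩
  · simp [S.F_pow_E_apply hv]
  · rw [apply_pow_apply_of_lie_eq_smul hE (mem_lowestWeight.1 hv).2]
    ring_nf

theorem lowestWeight_le_comap_E_pow [IsNoetherian ℤ L] [Fintype ι] {p : ℕ} (hp : p.Prime) {a : ℕ}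
    (hap : a < p) {c : ℤ} (hmod : c ≡ a [ZMOD p]) (hac : a ≤ c) :
    S.lowestWeight Finset.univ (1 - c) ≤
      (S.lowestWeight Finset.univ (1 - (c - 2 * a)) ⊔ (p : ℤ) • (⊤ : Submodule ℤ L)).comap
        (S.E Finset.univ ^ a) := by
  classical
  obtain rfl | hac := hac.eq_or_lt
  · intro v hv
    rw [show (1 - (a - 2 * a) : ℤ) = 1 + a by ring]
    exact Submodule.mem_sup_left (E_pow_apply_mem_lowestWeight hv)
  refine lowestWeight_univ_le_singletSpan.trans (iSup₂_le fun K ⟨_, hK⟩ v hv ↦ ?_)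
  have hKc : (Kᶜ.card : ℤ) = c - 1 := by
    rw [Finset.card_compl, Nat.cast_sub (Finset.card_le_univ K), hK, Finset.card_univ]
    ring
  have hEv := E_pow_apply_mem_of_mem_singlets hp hap (by lia) (by simpa [hKc] using hmod) hv
  rwa [hKc, show 2 * a - (c - 1) = 1 - (c - 2 * a) by ring] at hEv

end Lift

theorem natCast_dvd_E_pow {p : ℕ} (hp : p.Prime) (U : Finset ι) :
    (p : Module.End ℤ L) ∣ S.E U ^ p := by
  refine natCast_dvd_sum_pow_prime hp U S.commute_e_e fun i ↦ ?_
  rw [pow_eq_zero_of_le hp.two_le (by rw [sq, S.e_mul_self])]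
  exact dvd_zero _

theorem exists_apply_E_pow_eq_factorial_smul (hv : ∀ i ∈ T, S.f i v = 0) {k : ℕ}
    (hk : k ≤ T.card) : ∃ D : Module.End ℤ L, D ((S.E T ^ k) v) = k.factorial • v := by
  classical
  induction k generalizing T with
  | zero => exact ⟨1, by simp⟩
  | succ k ih =>
    obtain ⟨i, hi⟩ := Finset.card_pos.1 (k.succ_pos.trans_le hk)
    have hi' : i ∉ T.erase i := Finset.notMem_erase i T
    obtain ⟨D, hD⟩ := ih (T := T.erase i) (fun j hj ↦ hv j (Finset.mem_of_mem_erase hj))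
      (by rw [Finset.card_erase_of_mem hi]; lia)
    have hf (m : ℕ) : S.f i ((S.E (T.erase i) ^ m) v) = 0 := by
      rw [apply_comm_of_commute ((S.commute_f_E hi').pow_right m), hv i hi, map_zero]
    have hlower : S.f i ((S.E T ^ (k + 1)) v) = (k + 1) • (S.E (T.erase i) ^ k) v := by
      rw [← Finset.insert_erase hi, E_insert hi',
        add_pow_succ_of_mul_self_eq_zero (S.commute_e_E i _) (S.e_mul_self i),
        Finset.erase_insert hi']
      simp [hf, f_e_apply, -nsmul_eq_mul, LinearMap.smul_apply]
    refine ⟨D * S.f i, ?_⟩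
    rw [Module.End.mul_apply, hlower, map_nsmul, hD, smul_smul, Nat.factorial_succ]

theorem mem_smul_top_of_E_pow_apply_mem {p : ℕ} (hp : p.Prime) (hv : ∀ i ∈ T, S.f i v = 0) {k : ℕ}
    (hk : k ≤ T.card) (hkp : k < p)
    (hEv : (S.E T ^ k) v ∈ (p : ℤ) • (⊤ : Submodule ℤ L)) : v ∈ (p : ℤ) • (⊤ : Submodule ℤ L) := by
  obtain ⟨D, hD⟩ := exists_apply_E_pow_eq_factorial_smul hv hk
  obtain ⟨w, hw⟩ := mem_smul_top_iff.1 hEv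
  refine mem_of_isCoprime_smul_mem (isCoprime_natCast_factorial_of_lt hp hkp)
    (mem_smul_top_iff.2 ⟨v, rfl⟩) (mem_smul_top_iff.2 ⟨D w, ?_⟩)
  rw [natCast_zsmul, ← hD, hw, map_zsmul]

theorem exists_mem_singlets_notMem_smul_top [Fintype ι] {m : ℤ} (hv : ∀ i, S.f i v = 0)
    (hvm : v ∉ m • (⊤ : Submodule ℤ L)) {r : ℕ} (hr : 2 * r ≤ Fintype.card ι) :
    ∃ K : Finset ι, K.card = 2 * r ∧ ∃ w ∈ S.singlets K, w ∉ m • (⊤ : Submodule ℤ L) := by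
  classical
  induction r with
  | zero => exact ⟨∅, rfl, v, mem_singlets.2 ⟨fun i _ ↦ hv i, by simp [E], by simp [F]⟩, hvm⟩
  | succ r ih =>
    obtain ⟨K, hK, w, hw, hwm⟩ := ih (by lia)
    obtain ⟨i, hi, j, hj, hij⟩ := Finset.one_lt_card.1 (show 1 < Kᶜ.card by
      rw [Finset.card_compl]; lia)
    rw [Finset.mem_compl] at hi hj
    obtain ⟨u, hu, rfl⟩ := singlets_le_map_f hi hj hij hw
    refine ⟨insert i (insert j K), ?_, u, hu, fun hum ↦ hwm ?_⟩
    · rw [Finset.card_insert_of_notMem (by simp [hij, hi]), Finset.card_insert_of_notMem hj, hK]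
      ring
    · obtain ⟨x, rfl⟩ := mem_smul_top_iff.1 hum
      exact mem_smul_top_iff.2 ⟨S.f i x, map_zsmul _ _ _⟩

theorem exists_mem_lowestWeight_E_pow_apply_notMem_smul_top [Fintype ι] {p : ℕ} (hp : p.Prime)
    (hv : ∀ i, S.f i v = 0) (hvp : v ∉ (p : ℤ) • (⊤ : Submodule ℤ L)) {a b r : ℕ} (hap : a < p)
    (hab : a ≤ b) (hb : b + 2 * r = Fintype.card ι) :
    ∃ w ∈ S.lowestWeight Finset.univ (-b),
      (S.E Finset.univ ^ a) w ∉ (p : ℤ) • (⊤ : Submodule ℤ L) := by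
  classical
  obtain ⟨K, hK, w, hw, hwp⟩ :=
    exists_mem_singlets_notMem_smul_top hv hvp (show 2 * r ≤ Fintype.card ι by lia)
  have hKb : ((K.card : ℤ) - Finset.univ.card (α := ι)) = -b := by rw [Finset.card_univ]; lia
  refine ⟨w, hKb ▸ singlets_le_lowestWeight (Finset.subset_univ K) hw, fun hEw ↦ hwp ?_⟩
  rw [E_univ_pow_apply hw] at hEw
  exact mem_smul_top_of_E_pow_apply_mem hp
    (fun i hi ↦ (mem_singlets.1 hw).1 i (Finset.mem_compl.1 hi))
    (by rw [Finset.card_compl]; lia) hap hEw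

end SpinHalfSystem

/-! ### Tensor powers -/

section PiTensorProduct

variable {R ι : Type*} {M : ι → Type*} [CommRing R] [∀ i, AddCommGroup (M i)] [∀ i, Module R (M i)]
  [DecidableEq ι]

/-- The action of an endomorphism on the `i`-th factor of a tensor product, as a ring
homomorphism. -/
noncomputable def siteHom (i : ι) : Module.End R (M i) →+* Module.End R (⨂[R] j, M j) :=
  RingHom.mk'
    (PiTensorProduct.mapMonoidHom.comp (MonoidHom.mulSingle (fun j ↦ Module.End R (M j)) i))
    (PiTensorProduct.map_update_add _ i)

theorem siteHom_apply (i : ι) (g : Module.End R (M i)) :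
    siteHom i g = PiTensorProduct.map (Function.update (fun _ ↦ LinearMap.id) i g) :=
  rfl

theorem siteHom_apply_tprod_eq_zero {i : ι} {g : Module.End R (M i)} {x : ∀ j, M j}
    (hx : g (x i) = 0) : siteHom i g (PiTensorProduct.tprod R x) = 0 := by
  rw [siteHom_apply, PiTensorProduct.map_tprod]
  exact (PiTensorProduct.tprod R).map_coord_zero i (by simpa using hx)

theorem commute_siteHom {i j : ι} (hij : i ≠ j) (g : Module.End R (M i)) (k : Module.End R (M j)) :
    Commute (siteHom i g) (siteHom j k) := by
  have hcomm := Pi.mulSingle_commute (f := fun j ↦ Module.End R (M j)) hij g k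
  exact hcomm.map (PiTensorProduct.mapMonoidHom (R := R) (s := M))

end PiTensorProduct

open scoped Pointwise in
theorem tprod_notMem_smul_top {R ι : Type*} {M κ : ι → Type*} [CommRing R] [Finite ι]
    [∀ i, AddCommGroup (M i)] [∀ i, Module R (M i)] (b : ∀ i, Module.Basis (κ i) R (M i))
    (c : ∀ i, κ i) {r : R} (hr : ¬IsUnit r) :
    PiTensorProduct.tprod R (fun i ↦ b i (c i)) ∉ r • (⊤ : Submodule R (⨂[R] i, M i)) := by
  rw [← Basis.piTensorProduct_apply, mem_smul_top_iff]
  rintro ⟨w, hw⟩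
  have hcoord := congrArg (fun x ↦ (Basis.piTensorProduct b).repr x c) hw
  rw [map_smul, Module.Basis.repr_self, Finsupp.smul_apply, Finsupp.single_eq_same,
    smul_eq_mul] at hcoord
  exact hr (.of_mul_eq_one _ hcoord.symm)

theorem eMap_mul_self : eMap * eMap = 0 := by
  rw [eMap, Module.End.mul_eq_comp, ← Matrix.toLin'_mul, ← map_zero Matrix.toLin']
  exact congrArg _ (by decide)

theorem fMap_mul_self : fMap * fMap = 0 := by
  rw [fMap, Module.End.mul_eq_comp, ← Matrix.toLin'_mul, ← map_zero Matrix.toLin']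
  exact congrArg _ (by decide)

theorem eMap_mul_fMap_add_fMap_mul_eMap : eMap * fMap + fMap * eMap = 1 := by
  simp [eMap, fMap, Module.End.mul_eq_comp, ← Matrix.toLin'_mul, ← map_add, ← Matrix.one_fin_two,
    Module.End.one_eq_id]

theorem eMap_mul_fMap_sub_fMap_mul_eMap : eMap * fMap - fMap * eMap = hMap := by
  simp [eMap, fMap, hMap, Module.End.mul_eq_comp, ← Matrix.toLin'_mul, ← map_sub]

theorem fMap_basisFun_zero : fMap (Pi.basisFun ℤ (Fin 2) 0) = 0 := by
  ext i; fin_cases i <;> simp [fMap]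

/-- The action of `e` and `f` on the `n` factors of `(ℤ²)^{⊗ n}`. -/
noncomputable def tensorPowerSystem (n : ℕ) : SpinHalfSystem (Fin n) (Ltens n) where
  e i := siteHom i eMap
  f i := siteHom i fMap
  e_mul_self i := by rw [← map_mul, eMap_mul_self, map_zero]
  f_mul_self i := by rw [← map_mul, fMap_mul_self, map_zero]
  e_mul_f_add_f_mul_e i := by
    rw [← map_mul, ← map_mul, ← map_add, eMap_mul_fMap_add_fMap_mul_eMap, map_one]
  commute_e_e i j := (eq_or_ne i j).elim (fun hij ↦ hij ▸ .refl _) (commute_siteHom · _ _)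
  commute_f_f i j := (eq_or_ne i j).elim (fun hij ↦ hij ▸ .refl _) (commute_siteHom · _ _)
  commute_e_f hij := commute_siteHom hij _ _

theorem tensorPowerSystem_E_univ (n : ℕ) : (tensorPowerSystem n).E Finset.univ = Eop n := rfl

theorem tensorPowerSystem_F_univ (n : ℕ) : (tensorPowerSystem n).F Finset.univ = Fop n := rfl

theorem tensorPowerSystem_H_univ (n : ℕ) : (tensorPowerSystem n).H Finset.univ = Hop n :=
  Finset.sum_congr rfl fun i _ ↦ by
    rw [← siteHom_apply, ← eMap_mul_fMap_sub_fMap_mul_eMap, map_sub, map_mul, map_mul]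
    exact Ring.lie_def _ _

theorem Sspace_eq_lowestWeight (n : ℕ) (c : ℤ) :
    Sspace n c = (tensorPowerSystem n).lowestWeight Finset.univ (1 - c) := by
  ext v
  rw [SetLike.mem_coe, SpinHalfSystem.mem_lowestWeight, tensorPowerSystem_F_univ,
    tensorPowerSystem_H_univ, ← neg_sub]
  rfl

theorem tensorPowerSystem_f_apply_vacuum {n : ℕ} (i : Fin n) :
    (tensorPowerSystem n).f i (PiTensorProduct.tprod ℤ fun _ ↦ Pi.basisFun ℤ (Fin 2) 0) = 0 :=
  siteHom_apply_tprod_eq_zero (M := fun _ ↦ Fin 2 → ℤ) fMap_basisFun_zero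

instance Ltens.isTorsionFree (n : ℕ) : Module.IsTorsionFree ℤ (Ltens n) := by
  have b := Basis.piTensorProduct (R := ℤ) fun _ : Fin n ↦ Pi.basisFun ℤ (Fin 2)
  exact b.isTorsionFree

/-- Let `p` be an odd prime, `c` a positive integer not divisible by `p`, and
`c₀ ∈ {1,…,p-1}` with `c ≡ c₀ (mod p)`. Then (i) `E^{c₀}(S^{(c)}) ⊆ S^{(c-2c₀)} + pL`;
(ii) `E^p(L) ⊆ pL`; (iii) if moreover `c > c₀`, `n ≥ c-1` and `n ≡ c-1 (mod 2)`, then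
`E^{c₀}(S^{(c)}) ⊄ pL`. -/
theorem pow_E_on_lowest_weight (p : ℕ) (hp : p.Prime) (hodd : Odd p)
    (n : ℕ) (hn : 1 ≤ n) (c : ℕ) (hcpos : 0 < c) (hpc : ¬ p ∣ c)
    (c0 : ℕ) (hc01 : 1 ≤ c0) (hc02 : c0 ≤ p - 1) (hmod : c ≡ c0 [MOD p]) :
    (∀ v ∈ Sspace n c, ∃ s ∈ Sspace n ((c : ℤ) - 2 * c0), ∃ w,
      ((Eop n) ^ c0) v = s + (p : ℤ) • w) ∧
    (∀ v : Ltens n, ∃ w, ((Eop n) ^ p) v = (p : ℤ) • w) ∧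
    (c0 < c → c - 1 ≤ n → n % 2 = (c - 1) % 2 →
      ∃ v ∈ Sspace n c, ∀ w, ((Eop n) ^ c0) v ≠ (p : ℤ) • w) := by
  have hc0p : c0 < p := by have := hp.pos; lia
  have hc0c : c0 ≤ c := (Nat.mod_eq_of_lt hc0p).symm.trans_le (hmod ▸ Nat.mod_le c p)
  simp only [Sspace_eq_lowestWeight, SetLike.mem_coe, ← tensorPowerSystem_E_univ]
  refine ⟨fun v hv ↦ ?_, fun v ↦ ?_, fun hc hcn hpar ↦ ?_⟩
  · obtain ⟨s, hs, y, hy, hsy⟩ := Submodule.mem_sup.1 <|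
      SpinHalfSystem.lowestWeight_le_comap_E_pow hp hc0p (Int.natCast_modEq_iff.2 hmod)
        (Int.ofNat_le.2 hc0c) hv
    obtain ⟨w, rfl⟩ := mem_smul_top_iff.1 hy
    exact ⟨s, hs, w, hsy.symm⟩
  · obtain ⟨D, hD⟩ := (tensorPowerSystem n).natCast_dvd_E_pow hp Finset.univ
    exact ⟨D v, by rw [hD]; simp⟩
  · have hp' : ¬IsUnit (p : ℤ) := (Nat.prime_iff_prime_int.1 hp).not_isUnit
    obtain ⟨v, hv, hEv⟩ := SpinHalfSystem.exists_mem_lowestWeight_E_pow_apply_notMem_smul_top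
      (S := tensorPowerSystem n) hp tensorPowerSystem_f_apply_vacuum
      (tprod_notMem_smul_top (fun _ ↦ Pi.basisFun ℤ (Fin 2)) (fun _ ↦ 0) hp')
      (b := c - 1) (r := (n - (c - 1)) / 2) hc0p (by lia) (by rw [Fintype.card_fin]; lia)
    refine ⟨v, ?_, fun w hw ↦ hEv (mem_smul_top_iff.2 ⟨w, hw⟩)⟩
    rwa [Nat.cast_pred hcpos, neg_sub] at hv
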